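/- Let T and S be bounded linear operators on H each admitting an A-adjoint. Then ω_A(T+S) ≤ sqrt( (1/2) · ( ‖T T^{♯_A} + S S^{♯_A}‖_A + ‖T T^{♯_A} − S S^{♯_A}‖_A ) + ω_A(S T^{♯_A}) + 2 ω_A(T) ω_A(S) ). -/

import Mathlib

noncomputable section

open ContinuousLinearMap

variable {H : Type*} [NormedAddCommGroup H] [InnerProductSpace ℂ H] [CompleteSpace H]

/-- The semi-inner product induced by the positive operator `A`: `⟨x, y⟩_A := ⟨A x, y⟩`. -/
def innA (A : H →L[ℂ] H) (x y : H) : ℂ := inner ℂ (A x) y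

/-- The seminorm induced by `A`: `‖x‖_A := ⟨x, x⟩_A ^ (1/2)`. -/
def vnormA (A : H →L[ℂ] H) (x : H) : ℝ := Real.sqrt (innA A x x).re

/-- The `A`-operator seminorm: `‖T‖_A := sup {‖T x‖_A : ‖x‖_A = 1}`. -/
def opNormA (A T : H →L[ℂ] H) : ℝ :=
  sSup {c : ℝ | ∃ x : H, vnormA A x = 1 ∧ c = vnormA A (T x)}

/-- The `A`-numerical radius: `ω_A(T) := sup {|⟨T x, x⟩_A| : ‖x‖_A = 1}`. -/
def wA (A T : H →L[ℂ] H) : ℝ :=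
  sSup {c : ℝ | ∃ x : H, vnormA A x = 1 ∧ c = ‖innA A (T x) x‖}

/-- `T` admits an `A`-adjoint: there is a bounded operator `X` with `A X = T* A`. -/
def HasAAdjoint (A T : H →L[ℂ] H) : Prop :=
  ∃ X : H →L[ℂ] H, A ∘L X = adjoint T ∘L A

/-- `X` is the reduced `A`-adjoint `T^{♯_A}` of `T`: it solves `A X = T* A` and its range
is contained in the closure of the range of `A`. -/
def IsReducedAAdjoint (A T X : H →L[ℂ] H) : Prop :=
  (A ∘L X = adjoint T ∘L A) ∧ ∀ y : H, X y ∈ closure (Set.range A)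

/-! With `X`, `Y` being `A`-adjoints of `T`, `S` and `‖x‖_A = 1`, expand
`|⟨(T + S) x, x⟩_A|² ≤ |⟨T x, x⟩_A|² + |⟨S x, x⟩_A|² + 2 |⟨T x, x⟩_A| |⟨S x, x⟩_A|`. The first two
terms are `|⟨X x, x⟩_A|² + |⟨Y x, x⟩_A|²`, which Bombieri's inequality bounds by
`max (‖X x‖_A²) (‖Y x‖_A²) + |⟨X x, Y x⟩_A|`. Here `⟨X x, Y x⟩_A = ⟨S X x, x⟩_A`, and the maximum is
half of the sum plus half of the absolute difference of `⟨T X x, x⟩_A` and `⟨S Y x, x⟩_A`.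

The suprema defining `ω_A` and `‖·‖_A` are taken in `ℝ`, so each use of them as an upper bound
needs boundedness: an operator which is its own `A`-adjoint satisfies `‖P x‖_A² ≤ ‖x‖_A ‖P² x‖_A`,
and iterating this along the powers `P ^ 2 ^ n` gives `‖P x‖_A ≤ ‖P‖ ‖x‖_A`. -/

section Bombieri

variable {𝕜 E ι : Type*} [RCLike 𝕜] [SeminormedAddCommGroup E] [InnerProductSpace 𝕜 E]

theorem norm_sum_smul_sq_le_mul_sum_norm_sq (s : Finset ι) (c : ι → 𝕜) (y : ι → E) {M : ℝ}
    (hM : ∀ i ∈ s, ∑ j ∈ s, ‖inner 𝕜 (y i) (y j)‖ ≤ M) :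
    ‖∑ i ∈ s, c i • y i‖ ^ 2 ≤ M * ∑ i ∈ s, ‖c i‖ ^ 2 := by
  calc ‖∑ i ∈ s, c i • y i‖ ^ 2
      ≤ ‖inner 𝕜 (∑ i ∈ s, c i • y i) (∑ j ∈ s, c j • y j)‖ := by
        rw [norm_sq_eq_re_inner (𝕜 := 𝕜)]
        exact RCLike.re_le_norm _
    _ ≤ ∑ i ∈ s, ∑ j ∈ s, ‖c i‖ * ‖c j‖ * ‖inner 𝕜 (y i) (y j)‖ := by
        simp only [sum_inner, inner_sum]
        refine norm_sum_le_of_le _ fun i _ => norm_sum_le_of_le _ fun j _ => ?_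
        rw [inner_smul_left, inner_smul_right, norm_mul, norm_mul, RCLike.norm_conj,
          norm_inner_symm, mul_left_comm, mul_assoc]
    _ ≤ ∑ i ∈ s, ∑ j ∈ s, (‖c i‖ ^ 2 / 2 * ‖inner 𝕜 (y i) (y j)‖ +
          ‖c j‖ ^ 2 / 2 * ‖inner 𝕜 (y j) (y i)‖) := by
        gcongr with i _ j _
        rw [norm_inner_symm (y j), ← add_mul]
        gcongr
        linarith [two_mul_le_add_sq ‖c i‖ ‖c j‖]
    _ = ∑ i ∈ s, ‖c i‖ ^ 2 * ∑ j ∈ s, ‖inner 𝕜 (y i) (y j)‖ := by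
        simp only [Finset.sum_add_distrib]
        rw [Finset.sum_comm (f := fun i j => ‖c j‖ ^ 2 / 2 * ‖inner 𝕜 (y j) (y i)‖),
          ← Finset.sum_add_distrib]
        refine Finset.sum_congr rfl fun i _ => ?_
        rw [← Finset.mul_sum]
        ring
    _ ≤ ∑ i ∈ s, ‖c i‖ ^ 2 * M := by
        gcongr with i hi
        exact hM i hi
    _ = M * ∑ i ∈ s, ‖c i‖ ^ 2 := by rw [← Finset.sum_mul, mul_comm]

/-- **Bombieri's inequality**. -/
theorem sum_norm_inner_sq_le_mul_norm_sq (s : Finset ι) (y : ι → E) (x : E) {M : ℝ} (hM₀ : 0 ≤ M)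
    (hM : ∀ i ∈ s, ∑ j ∈ s, ‖inner 𝕜 (y i) (y j)‖ ≤ M) :
    ∑ i ∈ s, ‖inner 𝕜 (y i) x‖ ^ 2 ≤ M * ‖x‖ ^ 2 := by
  set N := ∑ i ∈ s, ‖inner 𝕜 (y i) x‖ ^ 2 with hN
  have hN₀ : 0 ≤ N := by positivity
  have h_inner : inner 𝕜 (∑ i ∈ s, inner 𝕜 (y i) x • y i) x = (N : 𝕜) := by
    simp only [sum_inner, inner_smul_left, RCLike.conj_mul, hN, RCLike.ofReal_sum,
      RCLike.ofReal_pow]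
  have hN_le : N ≤ ‖∑ i ∈ s, inner 𝕜 (y i) x • y i‖ * ‖x‖ := by
    simpa only [h_inner, RCLike.norm_of_nonneg hN₀] using
      norm_inner_le_norm (𝕜 := 𝕜) (∑ i ∈ s, inner 𝕜 (y i) x • y i) x
  have h_sq : N * N ≤ N * (M * ‖x‖ ^ 2) := calc
    N * N ≤ (‖∑ i ∈ s, inner 𝕜 (y i) x • y i‖ * ‖x‖) ^ 2 := by
      rw [← sq]
      gcongr
    _ ≤ M * N * ‖x‖ ^ 2 := by
      rw [mul_pow]
      gcongr
      exact norm_sum_smul_sq_le_mul_sum_norm_sq s _ y hM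
    _ = N * (M * ‖x‖ ^ 2) := by ring
  rcases hN₀.eq_or_lt with h₀ | h_pos
  · rw [← h₀]
    positivity
  · exact le_of_mul_le_mul_left h_sq h_pos

theorem norm_inner_sq_add_norm_inner_sq_le (u v x : E) :
    ‖inner 𝕜 u x‖ ^ 2 + ‖inner 𝕜 v x‖ ^ 2 ≤
      (max (‖u‖ ^ 2) (‖v‖ ^ 2) + ‖inner 𝕜 u v‖) * ‖x‖ ^ 2 := by
  have h_row : ∀ i ∈ Finset.univ, ∑ j, ‖inner 𝕜 (![u, v] i) (![u, v] j)‖ ≤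
      max (‖u‖ ^ 2) (‖v‖ ^ 2) + ‖inner 𝕜 u v‖ := by
    simp [Fin.forall_fin_two, inner_self_eq_norm_sq_to_K, norm_inner_symm v u, add_comm]
  simpa using sum_norm_inner_sq_le_mul_norm_sq Finset.univ ![u, v] x (by positivity) h_row

end Bombieri

theorem le_of_frequently_pow_le_mul_pow {a b C : ℝ} (hb : 0 ≤ b)
    (h : ∃ᶠ n : ℕ in Filter.atTop, a ^ n ≤ C * b ^ n) : a ≤ b := by
  by_contra! hab
  have h_small := ((isLittleO_pow_pow_of_lt_left hb hab).const_mul_left C).def one_half_pos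
  obtain ⟨n, hn, hn_small⟩ := (h.and_eventually h_small).exists
  have h_pos : 0 < a ^ n := pow_pos (hb.trans_lt hab) n
  rw [Real.norm_of_nonneg h_pos.le] at hn_small
  linarith [Real.le_norm_self (C * b ^ n)]

section SemiInner

variable {A : H →L[ℂ] H}

omit [CompleteSpace H] in
theorem innA_add_left (x y z : H) : innA A (x + y) z = innA A x z + innA A y z := by
  simp only [innA, map_add, inner_add_left]

omit [CompleteSpace H] in
theorem innA_sub_left (x y z : H) : innA A (x - y) z = innA A x z - innA A y z := by
  simp only [innA, map_sub, inner_sub_left]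

omit [CompleteSpace H] in
theorem vnormA_nonneg (x : H) : 0 ≤ vnormA A x :=
  Real.sqrt_nonneg _

theorem innA_eq_inner_sqrt (hA : A.IsPositive) (x y : H) :
    innA A x y = inner ℂ (CFC.sqrt A x) (CFC.sqrt A y) := by
  have h_sqrt : (CFC.sqrt A).IsPositive := (nonneg_iff_isPositive _).1 (CFC.sqrt_nonneg A)
  rw [← h_sqrt.inner_left_eq_inner_right, ← mul_apply_eq_comp,
    CFC.sqrt_mul_sqrt_self A ((nonneg_iff_isPositive A).2 hA), innA]

theorem vnormA_eq_norm_sqrt (hA : A.IsPositive) (x : H) : vnormA A x = ‖CFC.sqrt A x‖ := by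
  rw [vnormA, innA_eq_inner_sqrt hA, norm_eq_sqrt_re_inner (𝕜 := ℂ), RCLike.re_eq_complex_re]

theorem innA_self_eq_vnormA_sq (hA : A.IsPositive) (x : H) :
    innA A x x = ((vnormA A x ^ 2 : ℝ) : ℂ) := by
  rw [innA_eq_inner_sqrt hA, vnormA_eq_norm_sqrt hA, inner_self_eq_norm_sq_to_K]
  norm_cast

theorem norm_innA_symm (hA : A.IsPositive) (x y : H) : ‖innA A x y‖ = ‖innA A y x‖ := by
  rw [innA_eq_inner_sqrt hA, innA_eq_inner_sqrt hA, norm_inner_symm]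

theorem norm_innA_le_vnormA_mul_vnormA (hA : A.IsPositive) (x y : H) :
    ‖innA A x y‖ ≤ vnormA A x * vnormA A y := by
  simpa only [innA_eq_inner_sqrt hA, vnormA_eq_norm_sqrt hA] using norm_inner_le_norm _ _

theorem norm_innA_sq_add_norm_innA_sq_le (hA : A.IsPositive) (u v x : H) :
    ‖innA A u x‖ ^ 2 + ‖innA A v x‖ ^ 2 ≤
      (max (vnormA A u ^ 2) (vnormA A v ^ 2) + ‖innA A u v‖) * vnormA A x ^ 2 := by
  simpa only [innA_eq_inner_sqrt hA, vnormA_eq_norm_sqrt hA] using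
    norm_inner_sq_add_norm_inner_sq_le _ _ _

end SemiInner

/-- `X` is an `A`-adjoint of `T`, not necessarily the reduced one. For `A` positive this means
`⟨T x, y⟩_A = ⟨x, X y⟩_A` for all `x`, `y`. -/
def IsAAdjoint (A T X : H →L[ℂ] H) : Prop :=
  A ∘L X = adjoint T ∘L A

namespace IsAAdjoint

variable {A T S X Y P : H →L[ℂ] H}

theorem symm (hA : A.IsPositive) (h : IsAAdjoint A T X) : IsAAdjoint A X T := by
  simpa only [IsAAdjoint, adjoint_comp, adjoint_adjoint, hA.isSelfAdjoint.adjoint_eq] using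
    (congrArg adjoint h).symm

theorem add (hT : IsAAdjoint A T X) (hS : IsAAdjoint A S Y) : IsAAdjoint A (T + S) (X + Y) := by
  rw [IsAAdjoint] at hT hS ⊢
  rw [comp_add, map_add, add_comp, hT, hS]

theorem sub (hT : IsAAdjoint A T X) (hS : IsAAdjoint A S Y) : IsAAdjoint A (T - S) (X - Y) := by
  rw [IsAAdjoint] at hT hS ⊢
  rw [comp_sub, map_sub, sub_comp, hT, hS]

theorem mul (hT : IsAAdjoint A T X) (hS : IsAAdjoint A S Y) : IsAAdjoint A (T * S) (Y * X) := by
  rw [IsAAdjoint] at hT hS ⊢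
  rw [mul_def, mul_def, adjoint_comp, ← comp_assoc, hS, comp_assoc, hT, comp_assoc]

theorem innA_apply_right (h : IsAAdjoint A T X) (x y : H) :
    innA A (X x) y = innA A x (T y) := by
  rw [innA, innA, ← adjoint_inner_left]
  exact congrArg (inner ℂ · y) (DFunLike.congr_fun h x)

theorem innA_apply_left (hA : A.IsPositive) (h : IsAAdjoint A T X) (x y : H) :
    innA A (T x) y = innA A x (X y) :=
  (h.symm hA).innA_apply_right x y

theorem innA_apply_apply_self (hA : A.IsPositive) (h : IsAAdjoint A T X) (x : H) :
    innA A (T (X x)) x = ((vnormA A (X x) ^ 2 : ℝ) : ℂ) := by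
  rw [h.innA_apply_left hA, innA_self_eq_vnormA_sq hA]

theorem vnormA_apply_sq_le (hA : A.IsPositive) (h : IsAAdjoint A T X) (x : H) :
    vnormA A (T x) ^ 2 ≤ vnormA A ((X * T) x) * vnormA A x := calc
  vnormA A (T x) ^ 2 = ‖innA A ((X * T) x) x‖ := by
    rw [mul_apply_eq_comp, (h.symm hA).innA_apply_apply_self hA, Complex.norm_real,
      Real.norm_of_nonneg (sq_nonneg _)]
  _ ≤ vnormA A ((X * T) x) * vnormA A x := norm_innA_le_vnormA_mul_vnormA hA _ _

theorem vnormA_apply_pow_two_pow_mul_le (hA : A.IsPositive) (h : IsAAdjoint A P P) (x : H)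
    (n : ℕ) :
    vnormA A (P x) ^ 2 ^ n * vnormA A x ≤
      vnormA A x ^ 2 ^ n * vnormA A ((P ^ 2 ^ n) x) := by
  induction n generalizing P with
  | zero => simp [mul_comm]
  | succ n ih =>
    have hx : 0 ≤ vnormA A x := vnormA_nonneg x
    calc vnormA A (P x) ^ 2 ^ (n + 1) * vnormA A x
        = (vnormA A (P x) ^ 2) ^ 2 ^ n * vnormA A x := by rw [pow_succ', pow_mul]
      _ ≤ (vnormA A ((P * P) x) * vnormA A x) ^ 2 ^ n * vnormA A x := by
          gcongr
          exact h.vnormA_apply_sq_le hA x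
      _ = vnormA A x ^ 2 ^ n * (vnormA A ((P * P) x) ^ 2 ^ n * vnormA A x) := by ring
      _ ≤ vnormA A x ^ 2 ^ n * (vnormA A x ^ 2 ^ n * vnormA A (((P * P) ^ 2 ^ n) x)) := by
          exact mul_le_mul_of_nonneg_left (ih (h.mul h)) (by positivity)
      _ = vnormA A x ^ 2 ^ (n + 1) * vnormA A ((P ^ 2 ^ (n + 1)) x) := by
          rw [← sq P, ← pow_mul, ← pow_succ', ← mul_assoc, ← pow_add, ← two_mul, ← pow_succ']

theorem vnormA_apply_le_norm_mul (hA : A.IsPositive) (h : IsAAdjoint A P P) (x : H) :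
    vnormA A (P x) ≤ ‖P‖ * vnormA A x := by
  rcases (vnormA_nonneg (A := A) x).eq_or_lt with hx | hx
  · have h_sq := h.vnormA_apply_sq_le hA x
    rw [← hx, mul_zero] at h_sq ⊢
    exact (pow_eq_zero_iff two_ne_zero).1 (h_sq.antisymm (sq_nonneg _)) |>.le
  have h_bound (n : ℕ) : vnormA A (P x) ^ 2 ^ n ≤
      ‖CFC.sqrt A‖ * ‖x‖ / vnormA A x * (‖P‖ * vnormA A x) ^ 2 ^ n := by
    rw [div_mul_eq_mul_div, le_div_iff₀ hx]
    calc vnormA A (P x) ^ 2 ^ n * vnormA A x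
        ≤ vnormA A x ^ 2 ^ n * vnormA A ((P ^ 2 ^ n) x) :=
          h.vnormA_apply_pow_two_pow_mul_le hA x n
      _ ≤ vnormA A x ^ 2 ^ n * (‖CFC.sqrt A‖ * (‖P‖ ^ 2 ^ n * ‖x‖)) := by
          rw [vnormA_eq_norm_sqrt hA ((P ^ 2 ^ n) x)]
          gcongr
          exact le_opNorm_of_le _ (le_of_opNorm_le _ (norm_pow_le' P (by positivity)) x)
      _ = ‖CFC.sqrt A‖ * ‖x‖ * (‖P‖ * vnormA A x) ^ 2 ^ n := by ring
  exact le_of_frequently_pow_le_mul_pow (by positivity) <|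
    (tendsto_pow_atTop_atTop_of_one_lt one_lt_two).frequently (.of_forall h_bound)

theorem vnormA_apply_le_sqrt_norm_mul (hA : A.IsPositive) (h : IsAAdjoint A T X) (x : H) :
    vnormA A (T x) ≤ √‖X * T‖ * vnormA A x := by
  have hx : 0 ≤ vnormA A x := vnormA_nonneg x
  refine le_of_sq_le_sq ?_ (by positivity)
  calc vnormA A (T x) ^ 2 ≤ vnormA A ((X * T) x) * vnormA A x := h.vnormA_apply_sq_le hA x
    _ ≤ ‖X * T‖ * vnormA A x * vnormA A x := by
      gcongr
      exact ((h.symm hA).mul h).vnormA_apply_le_norm_mul hA x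
    _ = (√‖X * T‖ * vnormA A x) ^ 2 := by
      rw [mul_pow, Real.sq_sqrt (norm_nonneg _), mul_assoc, sq (vnormA A x)]

theorem vnormA_apply_le_opNormA (hA : A.IsPositive) (h : IsAAdjoint A T X) {x : H}
    (hx : vnormA A x = 1) : vnormA A (T x) ≤ opNormA A T := by
  refine le_csSup ⟨√‖X * T‖, ?_⟩ ⟨x, hx, rfl⟩
  rintro _ ⟨y, hy, rfl⟩
  simpa only [hy, mul_one] using h.vnormA_apply_le_sqrt_norm_mul hA y

theorem norm_innA_apply_self_le_opNormA (hA : A.IsPositive) (h : IsAAdjoint A T X) {x : H}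
    (hx : vnormA A x = 1) : ‖innA A (T x) x‖ ≤ opNormA A T := calc
  ‖innA A (T x) x‖ ≤ vnormA A (T x) * vnormA A x := norm_innA_le_vnormA_mul_vnormA hA _ _
  _ = vnormA A (T x) := by rw [hx, mul_one]
  _ ≤ opNormA A T := h.vnormA_apply_le_opNormA hA hx

theorem norm_innA_apply_self_le_wA (hA : A.IsPositive) (h : IsAAdjoint A T X) {x : H}
    (hx : vnormA A x = 1) : ‖innA A (T x) x‖ ≤ wA A T := by
  refine le_csSup ⟨opNormA A T, ?_⟩ ⟨x, hx, rfl⟩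
  rintro _ ⟨y, hy, rfl⟩
  exact h.norm_innA_apply_self_le_opNormA hA hy

theorem max_vnormA_sq_le_opNormA_add_opNormA (hA : A.IsPositive) (hT : IsAAdjoint A T X)
    (hS : IsAAdjoint A S Y) {x : H} (hx : vnormA A x = 1) :
    max (vnormA A (X x) ^ 2) (vnormA A (Y x) ^ 2) ≤
      1 / 2 * (opNormA A (T * X + S * Y) + opNormA A (T * X - S * Y)) := by
  have hTX : IsAAdjoint A (T * X) (T * X) := hT.mul (hT.symm hA)
  have hSY : IsAAdjoint A (S * Y) (S * Y) := hS.mul (hS.symm hA)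
  have h_add := (hTX.add hSY).norm_innA_apply_self_le_opNormA hA hx
  have h_sub := (hTX.sub hSY).norm_innA_apply_self_le_opNormA hA hx
  rw [add_apply, mul_apply_eq_comp, mul_apply_eq_comp, innA_add_left,
    hT.innA_apply_apply_self hA, hS.innA_apply_apply_self hA, ← Complex.ofReal_add,
    Complex.norm_real, Real.norm_eq_abs] at h_add
  rw [sub_apply, mul_apply_eq_comp, mul_apply_eq_comp, innA_sub_left,
    hT.innA_apply_apply_self hA, hS.innA_apply_apply_self hA, ← Complex.ofReal_sub,
    Complex.norm_real, Real.norm_eq_abs] at h_sub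
  have h_sum := le_of_abs_le h_add
  obtain ⟨h_diff_ge, h_diff_le⟩ := abs_le.1 h_sub
  exact max_le (by linarith) (by linarith)

theorem norm_innA_apply_sq_add_norm_innA_apply_sq_le (hA : A.IsPositive) (hT : IsAAdjoint A T X)
    (hS : IsAAdjoint A S Y) {x : H} (hx : vnormA A x = 1) :
    ‖innA A (T x) x‖ ^ 2 + ‖innA A (S x) x‖ ^ 2 ≤
      1 / 2 * (opNormA A (T * X + S * Y) + opNormA A (T * X - S * Y)) + wA A (S * X) := calc
  ‖innA A (T x) x‖ ^ 2 + ‖innA A (S x) x‖ ^ 2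
    = ‖innA A (X x) x‖ ^ 2 + ‖innA A (Y x) x‖ ^ 2 := by
      rw [hT.innA_apply_left hA, hS.innA_apply_left hA, norm_innA_symm hA x, norm_innA_symm hA x]
  _ ≤ max (vnormA A (X x) ^ 2) (vnormA A (Y x) ^ 2) + ‖innA A (X x) (Y x)‖ := by
      simpa only [hx, one_pow, mul_one] using norm_innA_sq_add_norm_innA_sq_le hA (X x) (Y x) x
  _ = max (vnormA A (X x) ^ 2) (vnormA A (Y x) ^ 2) + ‖innA A ((S * X) x) x‖ := by
      rw [mul_apply_eq_comp, hS.innA_apply_left hA]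
  _ ≤ _ := by
      gcongr
      · exact max_vnormA_sq_le_opNormA_add_opNormA hA hT hS hx
      · exact (hS.mul (hT.symm hA)).norm_innA_apply_self_le_wA hA hx

end IsAAdjoint

theorem stmt7_general {A T S X Y : H →L[ℂ] H} (hA : A.IsPositive) (hT : IsAAdjoint A T X)
    (hS : IsAAdjoint A S Y) :
    wA A (T + S) ≤
      √(1 / 2 * (opNormA A (T * X + S * Y) + opNormA A (T * X - S * Y)) +
        wA A (S * X) + 2 * wA A T * wA A S) := by
  refine Real.sSup_le ?_ (Real.sqrt_nonneg _)
  rintro _ ⟨x, hx, rfl⟩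
  have hTx := hT.norm_innA_apply_self_le_wA hA hx
  have hSx := hS.norm_innA_apply_self_le_wA hA hx
  have h_wA_nonneg : 0 ≤ wA A T := (norm_nonneg _).trans hTx
  refine Real.le_sqrt_of_sq_le ?_
  calc ‖innA A ((T + S) x) x‖ ^ 2
      ≤ (‖innA A (T x) x‖ + ‖innA A (S x) x‖) ^ 2 := by
        rw [add_apply, innA_add_left]
        gcongr
        exact norm_add_le _ _
    _ = ‖innA A (T x) x‖ ^ 2 + ‖innA A (S x) x‖ ^ 2 +
          2 * ‖innA A (T x) x‖ * ‖innA A (S x) x‖ := by ring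
    _ ≤ _ := by
        gcongr ?_ + 2 * ?_ * ?_
        exact hT.norm_innA_apply_sq_add_norm_innA_apply_sq_le hA hS hx

theorem stmt7 (A : H →L[ℂ] H) (hA : A.IsPositive) (hA0 : A ≠ 0)
    (T S Tsharp Ssharp : H →L[ℂ] H)
    (hT : IsReducedAAdjoint A T Tsharp) (hS : IsReducedAAdjoint A S Ssharp) :
    wA A (T + S) ≤
      Real.sqrt ((1 / 2) * (opNormA A (T * Tsharp + S * Ssharp) +
          opNormA A (T * Tsharp - S * Ssharp)) +
        wA A (S * Tsharp) + 2 * wA A T * wA A S) :=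
  stmt7_general hA hT.1 hS.1
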